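/- Let n ≥ 1, let 1 ≤ m ≤ n, and let A be an n×n complex matrix. Then there exist complex coefficients a(σ), indexed by permutations σ of {1,…,m}, such that for all functions f, g : {1,…,m} → {1,…,n}: ∫_{U(n)} ∏_{k=1}^m (u A u*)_{f(k), g(k)} du = Σ_{σ ∈ S_m} a(σ) · [f = g ∘ σ], where [f = g ∘ σ] is 1 if f = g ∘ σ and 0 otherwise. (The averaged tensor power operator E^m_A lies in the image of the group algebra ℂS_m acting on ⊗^m ℂ^n; from the proof of Theorem 9.) -/

import Mathlib

open MeasureTheory Matrix
open scoped ComplexOrder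

noncomputable instance {n : ℕ} : MeasurableSpace (Matrix.unitaryGroup (Fin n) ℂ) := borel _
instance {n : ℕ} : BorelSpace (Matrix.unitaryGroup (Fin n) ℂ) := ⟨rfl⟩

/-- conjugation of `A` by the unitary `u` : `u * A * u*` -/
noncomputable def conjU {n : ℕ} (A : Matrix (Fin n) (Fin n) ℂ) (u : Matrix.unitaryGroup (Fin n) ℂ) :
    Matrix (Fin n) (Fin n) ℂ :=
  (u : Matrix (Fin n) (Fin n) ℂ) * A * star (u : Matrix (Fin n) (Fin n) ℂ)

/-!
By left invariance the averaged matrix `T = ∫ (u A u*)^{⊗κ} du` commutes with `v^{⊗κ}` for every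
unitary `v`. Schur-Weyl duality for the unitary group then puts `T` in the image of the group
algebra of `Equiv.Perm κ`, in two steps.

* The unitary group is Zariski dense in the space of all matrices, so a linear functional killing
  every `u^{⊗κ}` also kills the generic tensor power `X^{⊗κ}`. Since an entry of `X^{⊗κ}` is a
  monomial determining its position up to simultaneous permutation, the span of the `u^{⊗κ}`
  consists of all matrices invariant under place permutations, that is, it is the commutant of the
  symmetric group.
* Hence `T` lies in the double commutant of the symmetric group, which is the image of the group
  algebra by Maschke's theorem and the Jacobson density theorem.
-/

open scoped MonoidAlgebra

section DoubleCommutant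

open Representation

variable {k G V : Type*} [Field k] [Monoid G] [AddCommGroup V] [Module k V] [Module.Finite k V]

theorem mem_range_asAlgebraHom_of_mem_centralizer_centralizer (ρ : Representation k G V)
    [IsSemisimpleRepresentation ρ] {T : Module.End k V}
    (hT : T ∈ (Set.range ρ).centralizer.centralizer) : T ∈ ρ.asAlgebraHom.range := by
  have semisimple : IsSemisimpleModule k[G] ρ.asModule :=
    (isSemisimpleRepresentation_iff_isSemisimpleModule_asModule ρ).1 inferInstance
  have commutes (φ : Module.End k[G] ρ.asModule) (v : ρ.asModule) : T (φ v) = φ (T v) := by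
    let ψ : IntertwiningMap ρ ρ := (IntertwiningMap.equivAlgEnd ρ).symm φ
    have ψ_mem : ψ.toLinearMap ∈ (Set.range ρ).centralizer := by
      rintro _ ⟨g, rfl⟩
      exact (ψ.isIntertwining' g).symm
    exact congr($(hT _ ψ_mem) v).symm
  let T' : Module.End (Module.End k[G] ρ.asModule) ρ.asModule :=
    { toFun := T
      map_add' := map_add T
      map_smul' := commutes }
  obtain ⟨s, span_s⟩ := Module.Finite.fg_top (R := k) (M := V)
  obtain ⟨r, hr⟩ := jacobson_density T' s
  exact ⟨r, LinearMap.ext_on span_s fun v hv ↦ (hr v hv).symm⟩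

end DoubleCommutant

section TensorPower

variable {ι κ R : Type*} [Fintype ι] [DecidableEq ι] [Fintype κ] [DecidableEq κ] [CommSemiring R]

variable (κ) in
/-- The `κ`-th tensor power of a square matrix, as a multiplicative map. It is written in the
standard tensor basis, indexed by the functions `κ → ι`. -/
def tensorPower : Matrix ι ι R →* Matrix (κ → ι) (κ → ι) R where
  toFun M := .of fun f g ↦ ∏ k, M (f k) (g k)
  map_one' := by
    ext f g
    simp [Matrix.one_apply, Finset.prod_ite_zero, funext_iff]
  map_mul' M N := by
    ext f g
    simp [Matrix.mul_apply, Finset.prod_univ_sum, Finset.prod_mul_distrib]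

theorem tensorPower_apply (M : Matrix ι ι R) (f g : κ → ι) :
    tensorPower κ M f g = ∏ k, M (f k) (g k) := rfl

end TensorPower

section PlacePermutation

variable {ι κ R : Type*} [CommSemiring R]

variable (ι κ R) in
/-- The action of `Equiv.Perm κ` on the `κ`-th tensor power of `ι → R` permuting the tensor
factors. A tensor is encoded by its coordinates, a function on `κ → ι`. -/
def placePermutation : Representation R (Equiv.Perm κ) ((κ → ι) → R) where
  toFun σ := LinearMap.funLeft R R (· ∘ σ)
  map_one' := rfl
  map_mul' _ _ := rfl

theorem placePermutation_apply (σ : Equiv.Perm κ) (v : (κ → ι) → R) (f : κ → ι) :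
    placePermutation ι κ R σ v f = v (f ∘ σ) := rfl

variable [DecidableEq ι] [Fintype κ]

theorem placePermutation_single (σ : Equiv.Perm κ) (g : κ → ι) (c : R) :
    placePermutation ι κ R σ (Pi.single g c) = Pi.single (g ∘ ⇑σ⁻¹) c := by
  ext f
  simp only [placePermutation_apply, Pi.single_apply, Equiv.Perm.inv_def, Equiv.eq_comp_symm]

variable [DecidableEq κ]

theorem asAlgebraHom_placePermutation_single (r : R[Equiv.Perm κ]) (f g : κ → ι) :
    (placePermutation ι κ R).asAlgebraHom r (Pi.single g 1) f =
      ∑ σ : Equiv.Perm κ, r.coeff σ⁻¹ * (if f = g ∘ σ then 1 else 0) := by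
  rw [← Equiv.sum_comp (Equiv.inv (Equiv.Perm κ))]
  simp [Representation.asAlgebraHom_def, MonoidAlgebra.lift_apply, Finsupp.sum_fintype,
    placePermutation_single, Pi.single_apply]

variable [Fintype ι]

theorem toMatrix'_comp_perm_of_mem_centralizer {S : Module.End R ((κ → ι) → R)}
    (hS : S ∈ (Set.range (placePermutation ι κ R)).centralizer) (σ : Equiv.Perm κ) (f g : κ → ι) :
    S.toMatrix' (f ∘ σ) (g ∘ σ) = S.toMatrix' f g := by
  have commutes := congr($(hS _ ⟨σ, rfl⟩) (Pi.single (g ∘ σ) 1) f)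
  simpa [LinearMap.toMatrix'_apply, placePermutation_single, placePermutation_apply,
    Function.comp_assoc] using commutes

end PlacePermutation

section ZariskiDensity

variable {ι : Type*} [Fintype ι] [DecidableEq ι]

theorem infinite_complex_unitSphere : (Metric.sphere (0 : ℂ) 1).Infinite :=
  (isPreconnected_sphere (by simp [Complex.rank_real_complex]) 0 1).infinite_of_nontrivial
    ⟨1, by simp, -1, by simp, by norm_num⟩

theorem diagonal_mem_unitaryGroup {d : ι → ℂ} (hd : ∀ i, ‖d i‖ = 1) :
    diagonal d ∈ unitaryGroup ι ℂ := by
  simp [mem_unitaryGroup_iff, star_eq_conjTranspose, diagonal_conjTranspose,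
    Complex.mul_conj, Complex.normSq_eq_norm_sq, hd]

variable {p : MvPolynomial (ι × ι) ℂ}
  (hp : ∀ u ∈ unitaryGroup ι ℂ, p.eval (fun ij ↦ u ij.1 ij.2) = 0)
include hp

theorem eval_conj_diagonal_eq_zero {u : Matrix ι ι ℂ} (hu : u ∈ unitaryGroup ι ℂ) (d : ι → ℂ) :
    p.eval (fun ij ↦ (u * diagonal d * star u) ij.1 ij.2) = 0 := by
  let q : MvPolynomial ι ℂ :=
    p.bind₁ fun ij ↦ ∑ k, .C (u ij.1 k) * .X k * .C (star u k ij.2)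
  have eval_q (x : ι → ℂ) : q.eval x = p.eval fun ij ↦ (u * diagonal x * star u) ij.1 ij.2 := by
    simp only [q, ← MvPolynomial.coe_aeval_eq_eval, RingHom.coe_coe, MvPolynomial.aeval_bind₁]
    simp [Matrix.mul_apply (M := u * diagonal x), mul_diagonal]
  have q_eq_zero : q = 0 := by
    refine MvPolynomial.funext_set (fun _ ↦ Metric.sphere 0 1)
      (fun _ ↦ infinite_complex_unitSphere) fun x hx ↦ ?_
    have diagonal_mem : diagonal x ∈ unitaryGroup ι ℂ :=
      diagonal_mem_unitaryGroup fun i ↦ by simpa using hx i trivial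
    rw [eval_q, map_zero]
    exact hp _ (mul_mem (mul_mem hu diagonal_mem) (Unitary.star_mem hu))
  rw [← eval_q, q_eq_zero, map_zero]

theorem eval_isHermitian_eq_zero {H : Matrix ι ι ℂ} (hH : H.IsHermitian) :
    p.eval (fun ij ↦ H ij.1 ij.2) = 0 := by
  rw [hH.spectral_theorem, Unitary.conjStarAlgAut_apply]
  exact eval_conj_diagonal_eq_zero hp hH.eigenvectorUnitary.2 _

theorem eval_isHermitian_add_smul_eq_zero {P Q : Matrix ι ι ℂ} (hP : P.IsHermitian)
    (hQ : Q.IsHermitian) (z : ℂ) : p.eval (fun ij ↦ (P + z • Q) ij.1 ij.2) = 0 := by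
  let q : Polynomial ℂ := p.aeval fun ij ↦ .C (P ij.1 ij.2) + .X * .C (Q ij.1 ij.2)
  have eval_q (z : ℂ) : q.eval z = p.eval fun ij ↦ (P + z • Q) ij.1 ij.2 := by
    simp only [q, ← Polynomial.coe_aeval_eq_eval, ← MvPolynomial.coe_aeval_eq_eval,
      MvPolynomial.comp_aeval_apply]
    simp [mul_comm z]
  have q_eq_zero : q = 0 := by
    refine Polynomial.eq_zero_of_infinite_isRoot _ <|
      (Set.infinite_range_of_injective Complex.ofReal_injective).mono ?_
    rintro _ ⟨t, rfl⟩
    exact (eval_q t).trans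
      (eval_isHermitian_eq_zero hp (hP.add (hQ.smul (Complex.conj_ofReal t))))
  rw [← eval_q, q_eq_zero, Polynomial.eval_zero]

theorem eq_zero_of_forall_eval_unitary_eq_zero : p = 0 := by
  refine MvPolynomial.funext fun x ↦ ?_
  let M : Matrix ι ι ℂ := .of fun i j ↦ x (i, j)
  have eval_M := eval_isHermitian_add_smul_eq_zero hp (realPart M).2 (imaginaryPart M).2 Complex.I
  rw [realPart_add_I_smul_imaginaryPart] at eval_M
  simpa [M] using eval_M

end ZariskiDensity

section SchurWeyl

variable {ι κ R : Type*} [Fintype κ]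

theorem exists_perm_comp_eq_of_sum_single_eq {α : Type*} {p q : κ → α}
    (h : ∑ k, Finsupp.single (p k) 1 = (∑ k, Finsupp.single (q k) 1 : α →₀ ℕ)) :
    ∃ σ : Equiv.Perm κ, q ∘ σ = p := by
  classical
  have card_fiber (a : α) : Fintype.card {k // p k = a} = Fintype.card {k // q k = a} := by
    simpa [Finsupp.finsetSum_apply, Finsupp.single_apply, Fintype.card_subtype]
      using DFunLike.congr_fun h a
  exact ⟨Equiv.ofFiberEquiv fun a ↦ Fintype.equivOfCardEq (card_fiber a),
    funext fun k ↦ Equiv.ofFiberEquiv_map _ k⟩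

variable [Fintype ι] [DecidableEq ι] [DecidableEq κ]

theorem tensorPower_mvPolynomialX_apply [CommSemiring R] (f g : κ → ι) :
    tensorPower κ (mvPolynomialX ι ι R) f g =
      .monomial (∑ k, Finsupp.single (f k, g k) 1) 1 := by
  simp [tensorPower_apply, MvPolynomial.X, MvPolynomial.monomial_sum_one]

theorem exists_linearMap_tensorPower_mvPolynomialX_eq [CommSemiring R]
    {B : Matrix (κ → ι) (κ → ι) R}
    (hB : ∀ (σ : Equiv.Perm κ) f g, B (f ∘ σ) (g ∘ σ) = B f g) :
    ∃ φ : MvPolynomial (ι × ι) R →ₗ[R] R,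
      ∀ f g, φ (tensorPower κ (mvPolynomialX ι ι R) f g) = B f g := by
  let exponent (fg : (κ → ι) × (κ → ι)) : ι × ι →₀ ℕ := ∑ k, .single (fg.1 k, fg.2 k) 1
  have factors : Function.FactorsThrough (fun fg ↦ B fg.1 fg.2) exponent := by
    intro fg fg' h
    obtain ⟨σ, hσ⟩ := exists_perm_comp_eq_of_sum_single_eq h
    have fst_comp : fg'.1 ∘ σ = fg.1 := funext fun k ↦ congr(($hσ k).1)
    have snd_comp : fg'.2 ∘ σ = fg.2 := funext fun k ↦ congr(($hσ k).2)
    simp only [← fst_comp, ← snd_comp, hB]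
  let c : (ι × ι →₀ ℕ) → R := Function.extend exponent (fun fg ↦ B fg.1 fg.2) 0
  let basis := MvPolynomial.basisMonomials (ι × ι) R
  refine ⟨basis.constr R c, fun f g ↦ ?_⟩
  calc basis.constr R c (tensorPower κ (mvPolynomialX ι ι R) f g)
      = basis.constr R c (basis (exponent (f, g))) := by
        rw [tensorPower_mvPolynomialX_apply, MvPolynomial.coe_basisMonomials]
    _ = c (exponent (f, g)) := basis.constr_basis R c _
    _ = B f g := factors.extend_apply 0 (f, g)

theorem mem_span_tensorPower_unitaryGroup {B : Matrix (κ → ι) (κ → ι) ℂ}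
    (hB : ∀ (σ : Equiv.Perm κ) f g, B (f ∘ σ) (g ∘ σ) = B f g) :
    B ∈ Submodule.span ℂ (tensorPower κ '' (unitaryGroup ι ℂ : Set (Matrix ι ι ℂ))) := by
  by_contra not_mem
  obtain ⟨L, L_B_ne_zero, span_le_ker⟩ := Submodule.exists_le_ker_of_notMem not_mem
  have L_apply (N : Matrix (κ → ι) (κ → ι) ℂ) : L N = ∑ f, ∑ g, L (.single f g 1) * N f g := by
    conv_lhs => rw [matrix_eq_sum_single N]
    simp only [map_sum]
    refine Finset.sum_congr rfl fun f _ ↦ Finset.sum_congr rfl fun g _ ↦ ?_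
    rw [mul_comm, ← smul_eq_mul, ← map_smul, smul_single, smul_eq_mul, mul_one]
  let p : MvPolynomial (ι × ι) ℂ :=
    ∑ f, ∑ g, .C (L (.single f g 1)) * tensorPower κ (mvPolynomialX ι ι ℂ) f g
  have p_eq_zero : p = 0 := by
    refine eq_zero_of_forall_eval_unitary_eq_zero fun u hu ↦ ?_
    calc p.eval (fun ij ↦ u ij.1 ij.2) = L (tensorPower κ u) := by
          rw [L_apply]
          simp [p, tensorPower_apply]
      _ = 0 := span_le_ker (Submodule.subset_span ⟨u, hu, rfl⟩)
  obtain ⟨φ, hφ⟩ := exists_linearMap_tensorPower_mvPolynomialX_eq hB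
  refine L_B_ne_zero ?_
  calc L B = φ p := by simp [p, L_apply B, ← MvPolynomial.smul_eq_C_mul, hφ]
    _ = 0 := by rw [p_eq_zero, map_zero]

variable {T : Matrix (κ → ι) (κ → ι) ℂ} (hT : ∀ u ∈ unitaryGroup ι ℂ, Commute (tensorPower κ u) T)
include hT

theorem commute_of_forall_commute_tensorPower_unitary {B : Matrix (κ → ι) (κ → ι) ℂ}
    (hB : ∀ (σ : Equiv.Perm κ) f g, B (f ∘ σ) (g ∘ σ) = B f g) : Commute B T := by
  have span_le_centralizer :
      Submodule.span ℂ (tensorPower κ '' (unitaryGroup ι ℂ : Set (Matrix ι ι ℂ))) ≤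
        (Subalgebra.centralizer ℂ {T}).toSubmodule := by
    rw [Submodule.span_le]
    rintro _ ⟨u, hu, rfl⟩ _ rfl
    exact (hT u hu).symm
  exact (span_le_centralizer (mem_span_tensorPower_unitaryGroup hB) T rfl).symm

theorem toLin'_mem_centralizer_centralizer_placePermutation :
    toLin' T ∈ (Set.range (placePermutation ι κ ℂ)).centralizer.centralizer := by
  intro S hS
  have commutes : Commute S.toMatrix' T :=
    commute_of_forall_commute_tensorPower_unitary hT (toMatrix'_comp_perm_of_mem_centralizer hS)
  apply LinearMap.toMatrix'.injective
  simpa [LinearMap.toMatrix'_mul] using commutes.eq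

theorem exists_eq_sum_perm_of_forall_commute_tensorPower_unitary :
    ∃ a : Equiv.Perm κ → ℂ, ∀ f g : κ → ι,
      T f g = ∑ σ : Equiv.Perm κ, a σ * (if f = g ∘ σ then 1 else 0) := by
  obtain ⟨r, hr⟩ := mem_range_asAlgebraHom_of_mem_centralizer_centralizer _
    (toLin'_mem_centralizer_centralizer_placePermutation hT)
  refine ⟨fun σ ↦ r.coeff σ⁻¹, fun f g ↦ ?_⟩
  calc T f g = toLin' T (Pi.single g 1) f := by simp
    _ = (placePermutation ι κ ℂ).asAlgebraHom r (Pi.single g 1) f := congr($hr.symm _ f)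
    _ = _ := asAlgebraHom_placePermutation_single r f g

end SchurWeyl

section HaarAverage

theorem commute_integral_of_forall_semiconjBy {G X 𝕜 : Type*} [Group G] [MeasurableSpace G]
    [MeasurableMul G] [Fintype X] [RCLike 𝕜] {μ : Measure G} [μ.IsMulLeftInvariant]
    {F : G → Matrix X X 𝕜} (hF : ∀ i j, Integrable (fun u ↦ F u i j) μ) {P : Matrix X X 𝕜} {v : G}
    (hP : ∀ u, SemiconjBy P (F u) (F (v * u))) : Commute P (.of fun i j ↦ ∫ u, F u i j ∂μ) := by
  ext i j
  calc ∑ l, P i l * ∫ u, F u l j ∂μ = ∫ u, (P * F u) i j ∂μ := by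
        simp [Matrix.mul_apply, integral_finsetSum, Integrable.const_mul, hF, integral_const_mul]
    _ = ∫ u, (F (v * u) * P) i j ∂μ := by simp only [(hP _).eq]
    _ = ∫ u, (F u * P) i j ∂μ := integral_mul_left_eq_self (fun u ↦ (F u * P) i j) v
    _ = ∑ l, (∫ u, F u i l ∂μ) * P l j := by
        simp [Matrix.mul_apply, integral_finsetSum, Integrable.mul_const, hF, integral_mul_const]

variable {ι κ 𝕜 : Type*} [Fintype ι] [DecidableEq ι] [Fintype κ] [DecidableEq κ] [RCLike 𝕜]

instance compactSpace_unitaryGroup : CompactSpace (unitaryGroup ι 𝕜) := by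
  have isCompact_cube : IsCompact (Set.univ.pi fun _ ↦ Set.univ.pi fun _ ↦ Metric.closedBall 0 1 :
      Set (Matrix ι ι 𝕜)) :=
    isCompact_univ_pi fun _ ↦ isCompact_univ_pi fun _ ↦ isCompact_closedBall 0 1
  refine isCompact_iff_compactSpace.1 (isCompact_cube.of_isClosed_subset
    (isClosed_unitary (R := Matrix ι ι 𝕜)) fun u hu i _ j _ ↦ ?_)
  simpa using entry_norm_bound_of_unitary hu i j

theorem semiconjBy_conj_unitary (A : Matrix ι ι 𝕜) (u v : unitaryGroup ι 𝕜) :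
    SemiconjBy v.1 (u.1 * A * star u.1) ((v * u).1 * A * star (v * u).1) := by
  simp [SemiconjBy, Matrix.mul_assoc]

theorem integrable_tensorPower_conj [MeasurableSpace (unitaryGroup ι 𝕜)]
    [BorelSpace (unitaryGroup ι 𝕜)] (μ : Measure (unitaryGroup ι 𝕜)) [IsFiniteMeasure μ]
    (A : Matrix ι ι 𝕜) (f g : κ → ι) :
    Integrable (fun u ↦ tensorPower κ (u.1 * A * star u.1) f g) μ := by
  refine Continuous.integrable_of_hasCompactSupport ?_ (.of_compactSpace _)
  simp only [tensorPower_apply]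
  fun_prop

theorem stmt14_general [MeasurableSpace (unitaryGroup ι ℂ)] [BorelSpace (unitaryGroup ι ℂ)]
    (μ : Measure (unitaryGroup ι ℂ)) [μ.IsMulLeftInvariant] [IsFiniteMeasure μ]
    (A : Matrix ι ι ℂ) :
    ∃ a : Equiv.Perm κ → ℂ, ∀ f g : κ → ι,
      ∫ u, ∏ k, (u.1 * A * star u.1) (f k) (g k) ∂μ =
        ∑ σ : Equiv.Perm κ, a σ * (if f = g ∘ σ then 1 else 0) :=
  exists_eq_sum_perm_of_forall_commute_tensorPower_unitary fun v hv ↦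
    commute_integral_of_forall_semiconjBy (v := ⟨v, hv⟩) (integrable_tensorPower_conj μ A)
      fun u ↦ (semiconjBy_conj_unitary A u ⟨v, hv⟩).map (tensorPower κ)

end HaarAverage

theorem stmt14 (n m : ℕ) (hm1 : 1 ≤ m) (hmn : m ≤ n)
    (μ : Measure (Matrix.unitaryGroup (Fin n) ℂ))
    [μ.IsMulLeftInvariant] [IsProbabilityMeasure μ]
    (A : Matrix (Fin n) (Fin n) ℂ) :
    ∃ a : Equiv.Perm (Fin m) → ℂ, ∀ f g : Fin m → Fin n,
      ∫ u, ∏ k, (conjU A u) (f k) (g k) ∂μ =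
        ∑ σ : Equiv.Perm (Fin m), a σ * (if f = g ∘ σ then 1 else 0) :=
  stmt14_general μ A
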